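/- arXiv:1501.07613 — 3 statements merged into one kernel-verified Lean document; each statement's English description precedes it below -/
import Mathlib

section
/- Let π : A → B be a surjective *-homomorphism of C*-algebras with A σ-unital, and let m : B × B → B be a bounded bilinear map satisfying m(b₁b₂, b₃) = b₁·m(b₂, b₃) and m(b₁, b₂b₃) = m(b₁, b₂)·b₃ for all b₁, b₂, b₃ ∈ B (m is a quasi-centralizer of B). Then there exists a bounded bilinear map m̃ : A × A → A satisfying m̃(a₁a₂, a₃) = a₁·m̃(a₂, a₃) and m̃(a₁, a₂a₃) = m̃(a₁, a₂)·a₃ for all a₁, a₂, a₃ ∈ A, with π(m̃(a, a')) = m(π(a), π(a')) for all a, a' ∈ A, and ‖m̃‖ = ‖m‖. -/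
/-!
Let `e` be strictly positive in `A`. A quasi-centralizer `m` of `B` is determined by the single
element `m (π e) (π e)`, because `m (b * π e) (π e * b') = b * m (π e) (π e) * b'`. So it suffices
to lift this element to some `x : A` with `‖a * x * a'‖ ≤ ‖m‖ * ‖a * e‖ * ‖e * a'‖` for all `a`
and `a'`: then `(a * e, e * a') ↦ a * x * a'` is well defined and bounded by `‖m‖`, and extends to
`A × A` since `A * e` and `e * A` are dense.

For the lifting, write `p = π e` as a limit of elements `p * vₙ * p` with `‖vₙ * p‖ ≤ 1` and
`‖p * vₙ‖ ≤ 1`. Then `m p p` is the limit of the elements `p * k * p` with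
`k = m (vₙ * p) (p * vₙ)`, so that `‖k‖ ≤ ‖m‖`. If all these `k` were self-adjoint, the limit would
lie in the order interval between `-‖m‖ • (p * p)` and `‖m‖ • (p * p)`, and surjective
⋆-homomorphisms map order intervals onto order intervals. The general case reduces to this one by
placing `k` and `star k` off the diagonal of a `2 × 2` matrix.
-/

open Filter Topology Set
open scoped CStarAlgebra

section TikhonovInverse

/-- The Tikhonov regularisation of `t ↦ t⁻¹` with parameter `δ`. Unlike `(t + δ)⁻¹` it vanishes
at `0`, so it can be applied to elements of non-unital algebras. -/
noncomputable def tikhonovInv (δ t : ℝ) : ℝ := t / (t ^ 2 + δ)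

variable {δ : ℝ}

lemma continuous_tikhonovInv (hδ : 0 < δ) : Continuous (tikhonovInv δ) :=
  continuous_id.div (by fun_prop) fun t ↦ by positivity

@[simp]
lemma tikhonovInv_zero : tikhonovInv δ 0 = 0 := zero_div _

lemma abs_mul_tikhonovInv_le_one (hδ : 0 < δ) (t : ℝ) : |t * tikhonovInv δ t| ≤ 1 := by
  have h : t * tikhonovInv δ t = t ^ 2 / (t ^ 2 + δ) := by rw [tikhonovInv]; ring
  rw [h, abs_of_nonneg (by positivity)]
  exact div_le_one_of_le₀ (by linarith) (by positivity)

lemma abs_mul_tikhonovInv_mul_sub_le (hδ : 0 < δ) (t : ℝ) :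
    |t * tikhonovInv δ t * t - t| ≤ √δ := by
  have h : t * tikhonovInv δ t * t - t = -(t * δ / (t ^ 2 + δ)) := by
    rw [tikhonovInv]; field_simp; ring
  rw [h, abs_neg, abs_div, abs_mul, abs_of_pos hδ, abs_of_pos (by positivity : 0 < t ^ 2 + δ),
    div_le_iff₀ (by positivity)]
  have am_gm : |t| * √δ ≤ t ^ 2 + δ := by
    nlinarith [sq_nonneg (|t| - √δ), sq_abs t, Real.sq_sqrt hδ.le, abs_nonneg t, Real.sqrt_nonneg δ]
  calc |t| * δ = √δ * (|t| * √δ) := by nth_rw 1 [← Real.mul_self_sqrt hδ.le]; ring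
    _ ≤ √δ * (t ^ 2 + δ) := by gcongr

variable {A : Type*} [NonUnitalCStarAlgebra A]

lemma exists_approx_pseudoinverse {s : A} (hs : IsSelfAdjoint s) :
    ∃ v : ℕ → A, (∀ n, ‖v n * s‖ ≤ 1) ∧ (∀ n, ‖s * v n‖ ≤ 1) ∧
      Tendsto (fun n ↦ s * v n * s) atTop (𝓝 s) := by
  let δ (n : ℕ) : ℝ := 1 / ((n : ℝ) + 1)
  have hδ (n : ℕ) : 0 < δ n := Nat.one_div_pos_of_nat
  have hcont (n : ℕ) : Continuous (tikhonovInv (δ n)) := continuous_tikhonovInv (hδ n)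
  let v (n : ℕ) : A := cfcₙ (tikhonovInv (δ n)) s
  have mul_v (n : ℕ) : s * v n = cfcₙ (fun t ↦ t * tikhonovInv (δ n) t) s := by
    rw [cfcₙ_mul (fun t : ℝ ↦ t) _ s, cfcₙ_id' ℝ s]
  have mul_v_mul (n : ℕ) :
      s * v n * s - s = cfcₙ (fun t ↦ t * tikhonovInv (δ n) t * t - t) s := by
    rw [cfcₙ_sub (fun t ↦ t * tikhonovInv (δ n) t * t) (fun t ↦ t) s,
      cfcₙ_mul (fun t ↦ t * tikhonovInv (δ n) t) (fun t ↦ t) s, cfcₙ_id' ℝ s, mul_v]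
  have norm_mul_v (n : ℕ) : ‖s * v n‖ ≤ 1 := by
    rw [mul_v]
    exact norm_cfcₙ_le fun t _ ↦ abs_mul_tikhonovInv_le_one (hδ n) t
  have v_comm (n : ℕ) : v n * s = s * v n := by
    simpa only [cfcₙ_id' ℝ s] using (cfcₙ_commute_cfcₙ (tikhonovInv (δ n)) (fun t : ℝ ↦ t) s).eq
  refine ⟨v, fun n ↦ (v_comm n).symm ▸ norm_mul_v n, norm_mul_v, ?_⟩
  rw [tendsto_iff_norm_sub_tendsto_zero]
  have sqrt_δ_tendsto : Tendsto (fun n ↦ √(δ n)) atTop (𝓝 0) := by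
    simpa only [Real.sqrt_zero] using (tendsto_one_div_add_atTop_nhds_zero_nat (𝕜 := ℝ)).sqrt
  refine squeeze_zero (fun _ ↦ norm_nonneg _) (fun n ↦ ?_) sqrt_δ_tendsto
  rw [mul_v_mul]
  exact norm_cfcₙ_le fun t _ ↦ abs_mul_tikhonovInv_mul_sub_le (hδ n) t

end TikhonovInverse

section NormOrder

variable {A : Type*} [NonUnitalCStarAlgebra A] [PartialOrder A] [StarOrderedRing A]

lemma norm_le_norm_of_mul_star_self_le {r s : A} (h : r * star r ≤ s * star s) : ‖r‖ ≤ ‖s‖ := by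
  have := CStarAlgebra.norm_le_norm_of_nonneg_of_le (mul_star_self_nonneg r) h
  rw [CStarRing.norm_self_mul_star, CStarRing.norm_self_mul_star] at this
  exact (mul_self_le_mul_self_iff (norm_nonneg _) (norm_nonneg _)).2 this

lemma norm_mul_le_norm_mul_of_mul_star_self_le {r s : A} (h : r * star r ≤ s * star s) (c : A) :
    ‖c * r‖ ≤ ‖c * s‖ := by
  refine norm_le_norm_of_mul_star_self_le ?_
  simpa only [star_mul, mul_assoc] using star_right_conjugate_le_conjugate h c

lemma norm_mul_le_norm_mul_of_star_mul_self_le {r s : A} (h : star r * r ≤ star s * s) (c : A) :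
    ‖r * c‖ ≤ ‖s * c‖ := by
  rw [← norm_star (r * c), ← norm_star (s * c), star_mul, star_mul]
  exact norm_mul_le_norm_mul_of_mul_star_self_le (by simpa only [star_star] using h) _

lemma norm_mul_mul_le_norm_mul_mul {g r s t : A} (hg : star g * g ≤ star s * s)
    (hr : r * star r ≤ t * star t) (w : A) : ‖g * w * r‖ ≤ ‖s * w * t‖ :=
  calc ‖g * w * r‖ ≤ ‖g * w * t‖ := norm_mul_le_norm_mul_of_mul_star_self_le hr _
    _ = ‖g * (w * t)‖ := by rw [mul_assoc]
    _ ≤ ‖s * (w * t)‖ := norm_mul_le_norm_mul_of_star_mul_self_le hg _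
    _ = ‖s * w * t‖ := by rw [mul_assoc]

lemma norm_mul_sub_le_of_mul_star_self_le {r s : A} (h : r * star r ≤ s * star s) (c : A) :
    ‖c * r - r‖ ≤ ‖c * s - s‖ := by
  refine norm_le_norm_of_mul_star_self_le ?_
  obtain ⟨z, hz⟩ := CStarAlgebra.nonneg_iff_eq_mul_star_self.1 (sub_nonneg.2 h)
  have key (y : A) : (c * y - y) * star (c * y - y) =
      c * (y * star y) * star c - c * (y * star y) - y * star y * star c + y * star y := by
    simp only [star_sub, star_mul]; noncomm_ring
  rw [← sub_nonneg]
  refine (mul_star_self_nonneg (c * z - z)).trans_eq ?_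
  rw [key, key, key, ← hz]
  noncomm_ring

lemma mul_mul_mul_star_self_le {r s v : A} (h : r * star r ≤ s * star s) (hv : ‖v * s‖ ≤ 1)
    (g : A) : g * v * r * star (g * v * r) ≤ g * star g :=
  calc g * v * r * star (g * v * r) = (g * v) * (r * star r) * star (g * v) := by
        simp only [star_mul, mul_assoc]
    _ ≤ (g * v) * (s * star s) * star (g * v) := star_right_conjugate_le_conjugate h _
    _ = g * (v * s * star (v * s)) * star g := by simp only [star_mul, mul_assoc]
    _ ≤ ‖v * s * star (v * s)‖ • (g * star g) :=
      CStarAlgebra.star_right_conjugate_le_norm_smul (mul_star_self_nonneg _).isSelfAdjoint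
    _ ≤ (1 : ℝ) • (g * star g) := by
      refine smul_le_smul_of_nonneg_right ?_ (mul_star_self_nonneg g)
      rw [CStarRing.norm_self_mul_star]
      exact mul_le_one₀ hv (norm_nonneg _) hv
    _ = g * star g := one_smul ..

lemma norm_le_norm_of_neg_le_of_le {y z : A} (hyz : -y ≤ z) (hzy : z ≤ y) : ‖z‖ ≤ ‖y‖ := by
  let _ := CStarAlgebra.spectralOrder (Unitization ℂ A)
  let _ := CStarAlgebra.spectralOrderedRing (Unitization ℂ A)
  have hy : IsSelfAdjoint y := by
    have : 0 ≤ y + y := neg_le_iff_add_nonneg.1 (hyz.trans hzy)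
    simpa [← two_smul ℝ y] using (IsSelfAdjoint.all (2⁻¹ : ℝ)).smul (IsSelfAdjoint.of_nonneg this)
  have hz : IsSelfAdjoint z := by
    simpa using hy.sub (IsSelfAdjoint.of_nonneg (sub_nonneg.2 hzy))
  have hz' : IsSelfAdjoint (z : Unitization ℂ A) := hz.inr ℂ
  have hy_le : (y : Unitization ℂ A) ≤ algebraMap ℝ _ ‖y‖ := by
    simpa only [Unitization.norm_inr] using (hy.inr ℂ).le_algebraMap_norm_self
  have z_le : (z : Unitization ℂ A) ≤ algebraMap ℝ _ ‖y‖ :=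
    ((Unitization.inr_le_iff z y hz hy).2 hzy).trans hy_le
  have le_z : algebraMap ℝ (Unitization ℂ A) (-‖y‖) ≤ z := by
    have := (Unitization.inr_le_iff (-y) z hy.neg hz).2 hyz
    rw [Unitization.inr_neg] at this
    rw [map_neg]
    exact (neg_le_neg hy_le).trans this
  rw [← Unitization.norm_inr (𝕜 := ℂ) z]
  rcases CStarAlgebra.norm_or_neg_norm_mem_spectrum hz' with h | h
  · exact (le_algebraMap_iff_spectrum_le hz').1 z_le _ h
  · exact neg_le_neg_iff.1 ((algebraMap_le_iff_le_spectrum hz').1 le_z _ h)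

lemma conjugate_mem_Icc {p k : A} {C : ℝ} (hk : IsSelfAdjoint k) (hkC : ‖k‖ ≤ C) :
    p * k * star p ∈ Icc (-(C • (p * star p))) (C • (p * star p)) := by
  have le {k : A} (hk : IsSelfAdjoint k) (hkC : ‖k‖ ≤ C) : p * k * star p ≤ C • (p * star p) :=
    (CStarAlgebra.star_right_conjugate_le_norm_smul hk).trans
      (smul_le_smul_of_nonneg_right hkC (mul_star_self_nonneg p))
  refine ⟨neg_le.1 ?_, le hk hkC⟩
  simpa only [mul_neg, neg_mul] using le hk.neg ((norm_neg k).trans_le hkC)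

lemma norm_conjugate_le {p k : A} {C : ℝ} (hC : 0 ≤ C)
    (hk : k ∈ Icc (-(C • (p * star p))) (C • (p * star p))) (c : A) :
    ‖c * k * star c‖ ≤ C * ‖c * p‖ ^ 2 := by
  have conj_eq : c * (C • (p * star p)) * star c = C • (c * p * star (c * p)) := by
    simp only [mul_smul_comm, smul_mul_assoc, star_mul, mul_assoc]
  have lower := star_right_conjugate_le_conjugate hk.1 c
  have upper := star_right_conjugate_le_conjugate hk.2 c
  rw [mul_neg, neg_mul, conj_eq] at lower
  rw [conj_eq] at upper
  refine (norm_le_norm_of_neg_le_of_le lower upper).trans_eq ?_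
  rw [norm_smul_of_nonneg hC, CStarRing.norm_self_mul_star, sq]

end NormOrder

section Lifting

variable {A B : Type*} [NonUnitalCStarAlgebra A] [NonUnitalCStarAlgebra B]
  [PartialOrder A] [StarOrderedRing A]

-- `u` is the limit of `g vₙ r`, where `s vₙ s → s`; morally it is `g s⁻¹ r`.
lemma exists_map_eq_mul_star_self_le (π : A →⋆ₙₐ[ℂ] B) {s g r : A} (hs : IsSelfAdjoint s)
    (hg : star g * g ≤ star s * s) (hr : r * star r ≤ s * star s) (hπ : π g = π s) :
    ∃ u : A, π u = π r ∧ u * star u ≤ g * star g := by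
  obtain ⟨v, norm_v_mul, -, hv⟩ := exists_approx_pseudoinverse hs
  have cauchy : CauchySeq fun n ↦ g * v n * r := by
    have sub_eq (x y : A) (i j : ℕ) : x * v i * y - x * v j * y = x * (v i - v j) * y := by
      simp only [mul_sub, sub_mul]
    refine Metric.cauchySeq_iff.2 fun ε hε ↦ ?_
    obtain ⟨N, hN⟩ := Metric.cauchySeq_iff.1 hv.cauchySeq ε hε
    refine ⟨N, fun i hi j hj ↦ lt_of_le_of_lt ?_ (hN i hi j hj)⟩
    rw [dist_eq_norm, dist_eq_norm, sub_eq, sub_eq]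
    exact norm_mul_mul_le_norm_mul_mul hg hr _
  obtain ⟨u, hu⟩ := cauchySeq_tendsto_of_complete cauchy
  refine ⟨u, ?_, le_of_tendsto' (hu.mul hu.star) fun n ↦
    mul_mul_mul_star_self_le hr (norm_v_mul n) g⟩
  have tendsto_r : Tendsto (fun n ↦ s * v n * r) atTop (𝓝 r) := by
    rw [tendsto_iff_norm_sub_tendsto_zero] at hv ⊢
    exact squeeze_zero (fun _ ↦ norm_nonneg _)
      (fun n ↦ norm_mul_sub_le_of_mul_star_self_le hr (s * v n)) hv
  refine tendsto_nhds_unique (((map_continuous π).tendsto u).comp hu)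
    ((((map_continuous π).tendsto r).comp tendsto_r).congr ?_)
  simp only [Function.comp_apply, map_mul, hπ, implies_true]

variable [PartialOrder B] [StarOrderedRing B]

lemma map_cfc_sqrt (π : A →⋆ₙₐ[ℂ] B) {a : A} (ha : 0 ≤ a) :
    π (CFC.sqrt a) = CFC.sqrt (π a) := by
  refine (CFC.sqrt_unique ?_ (map_nonneg π (CFC.sqrt_nonneg a))).symm
  rw [← map_mul, CFC.sqrt_mul_sqrt_self a]

lemma exists_nonneg_map_eq_zero_le_add (π : A →⋆ₙₐ[ℂ] B) {a h : A} (ha : IsSelfAdjoint a)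
    (hh : IsSelfAdjoint h) (hπ : π a ≤ π h) : ∃ c : A, 0 ≤ c ∧ π c = 0 ∧ a ≤ h + c := by
  have hah : IsSelfAdjoint (a - h) := ha.sub hh
  refine ⟨(a - h)⁺, CFC.posPart_nonneg _, ?_, sub_le_iff_le_add'.1 (CFC.le_posPart hah)⟩
  have map_nonpos : π (a - h) ≤ 0 := by rwa [map_sub, sub_nonpos]
  rw [CFC.posPart_def, π.map_cfcₙ _ _ (hφ := map_continuous π),
    ← CFC.posPart_def]
  exact (CFC.posPart_eq_zero_iff _ (hah.map π)).2 map_nonpos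

lemma exists_nonneg_le_map_eq (π : A →⋆ₙₐ[ℂ] B) (hπ : Function.Surjective π) {h : A} {b : B}
    (hh : 0 ≤ h) (hb : 0 ≤ b) (hbh : b ≤ π h) : ∃ x : A, 0 ≤ x ∧ x ≤ h ∧ π x = b := by
  obtain ⟨β, rfl⟩ := CStarAlgebra.nonneg_iff_eq_mul_star_self.1 hb
  obtain ⟨r, rfl⟩ := hπ β
  obtain ⟨c, hc, hπc, hrc⟩ := exists_nonneg_map_eq_zero_le_add π
    (mul_star_self_nonneg r).isSelfAdjoint hh.isSelfAdjoint (by rwa [map_mul, map_star])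
  have hhc : 0 ≤ h + c := add_nonneg hh hc
  have star_sqrt {y : A} : star (CFC.sqrt y) = CFC.sqrt y := (CFC.sqrt_nonneg y).isSelfAdjoint
  obtain ⟨u, hu, hu_le⟩ : ∃ u, π u = π r ∧ u * star u ≤ CFC.sqrt h * star (CFC.sqrt h) := by
    apply exists_map_eq_mul_star_self_le π (s := CFC.sqrt (h + c))
    · exact (CFC.sqrt_nonneg _).isSelfAdjoint
    · rw [star_sqrt, star_sqrt, CFC.sqrt_mul_sqrt_self h, CFC.sqrt_mul_sqrt_self _ hhc]
      exact le_add_of_nonneg_right hc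
    · rwa [star_sqrt, CFC.sqrt_mul_sqrt_self _ hhc]
    · rw [map_cfc_sqrt π hh, map_cfc_sqrt π hhc, map_add, hπc, add_zero]
  refine ⟨u * star u, mul_star_self_nonneg u, ?_, by rw [map_mul, map_star, hu]⟩
  rwa [star_sqrt, CFC.sqrt_mul_sqrt_self h] at hu_le

lemma exists_mem_Icc_map_eq (π : A →⋆ₙₐ[ℂ] B) (hπ : Function.Surjective π) {a₁ a₂ : A} {b : B}
    (ha : a₁ ≤ a₂) (hb : b ∈ Icc (π a₁) (π a₂)) : ∃ x ∈ Icc a₁ a₂, π x = b := by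
  obtain ⟨x, hx, hxa, hxb⟩ := exists_nonneg_le_map_eq π hπ (sub_nonneg.2 ha) (sub_nonneg.2 hb.1)
    (by rw [map_sub]; exact sub_le_sub_right hb.2 _)
  exact ⟨a₁ + x, ⟨le_add_of_nonneg_right hx, le_sub_iff_add_le'.1 hxa⟩,
    by rw [map_add, hxb, add_sub_cancel]⟩

end Lifting

lemma exists_map_eq_norm_conjugate_le {A B : Type*} [NonUnitalCStarAlgebra A]
    [NonUnitalCStarAlgebra B] (π : A →⋆ₙₐ[ℂ] B) (hπ : Function.Surjective π) {e : A} {b : B}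
    {C : ℝ} (hC : 0 ≤ C)
    (hb : b ∈ closure ((fun k ↦ π e * k * star (π e)) '' {k | IsSelfAdjoint k ∧ ‖k‖ ≤ C})) :
    ∃ x : A, π x = b ∧ ∀ c, ‖c * x * star c‖ ≤ C * ‖c * e‖ ^ 2 := by
  let _ := CStarAlgebra.spectralOrder A
  let _ := CStarAlgebra.spectralOrderedRing A
  let _ := CStarAlgebra.spectralOrder B
  let _ := CStarAlgebra.spectralOrderedRing B
  have map_smul : π (C • (e * star e)) = C • (π e * star (π e)) := by
    rw [← map_star, ← map_mul]
    exact map_real_smul π (map_continuous π) C _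
  have b_mem : b ∈ Icc (π (-(C • (e * star e)))) (π (C • (e * star e))) := by
    rw [map_neg, map_smul]
    refine closure_minimal ?_ isClosed_Icc hb
    rintro _ ⟨k, ⟨hk, hkC⟩, rfl⟩
    exact conjugate_mem_Icc hk hkC
  have neg_le_smul : -(C • (e * star e)) ≤ C • (e * star e) :=
    neg_le_self (smul_nonneg hC (mul_star_self_nonneg e))
  obtain ⟨x, hx, hxb⟩ := exists_mem_Icc_map_eq π hπ neg_le_smul b_mem
  exact ⟨x, hxb, norm_conjugate_le hC hx⟩

section Matrix

open CStarMatrix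

variable {n A B : Type*} [Fintype n] [NonUnitalCStarAlgebra A]
  [NonUnitalCStarAlgebra B]

lemma surjective_mapₙₐ {π : A →⋆ₙₐ[ℂ] B} (hπ : Function.Surjective π) :
    Function.Surjective (mapₙₐ (n := n) π) := fun M ↦ by
  choose lift h_lift using hπ
  exact ⟨M.map lift, by ext i j; exact h_lift (M i j)⟩

variable [DecidableEq n]

/-- The diagonal matrices over `A`, as a ⋆-homomorphism out of the C⋆-algebra `n → A`. -/
def diagonalStarHom : (n → A) →⋆ₙₐ[ℂ] CStarMatrix n n A where
  toFun d := ofMatrix (Matrix.diagonal d)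
  map_smul' c d := congrArg ofMatrix (Matrix.diagonal_smul c d)
  map_zero' := congrArg ofMatrix Matrix.diagonal_zero
  map_add' d d' := congrArg ofMatrix (Matrix.diagonal_add d d').symm
  map_mul' d d' := congrArg ofMatrix (Matrix.diagonal_mul_diagonal d d').symm
  map_star' d := congrArg ofMatrix (Matrix.diagonal_conjTranspose d).symm

lemma diagonalStarHom_apply (d : n → A) (i j : n) :
    diagonalStarHom d i j = if i = j then d i else 0 :=
  Matrix.diagonal_apply d i j

lemma diagonalStarHom_mul_mul_star_apply (d : n → A) (X : CStarMatrix n n A) (i j : n) :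
    (diagonalStarHom d * X * star (diagonalStarHom d)) i j = d i * X i j * star (d j) := by
  rw [← map_star]
  simp [mul_apply, diagonalStarHom_apply]

/-- The self-adjoint matrix with upper right corner `k` and zero diagonal. It turns statements
about arbitrary elements of `A` into statements about self-adjoint ones. -/
def hermitianDilation (k : A) : CStarMatrix (Fin 2) (Fin 2) A := ofMatrix !![0, k; star k, 0]

lemma isSelfAdjoint_hermitianDilation (k : A) : IsSelfAdjoint (hermitianDilation k) := by
  ext i j
  fin_cases i <;> fin_cases j <;> simp [hermitianDilation, star_apply]

lemma hermitianDilation_mul_self (k : A) :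
    hermitianDilation k * hermitianDilation k = diagonalStarHom ![k * star k, star k * k] := by
  ext i j
  fin_cases i <;> fin_cases j <;> simp [diagonalStarHom_apply, hermitianDilation, mul_apply]

lemma diagonalStarHom_mul_hermitianDilation_mul_star (a b k : A) :
    diagonalStarHom ![a, star b] * hermitianDilation k * star (diagonalStarHom ![a, star b]) =
      hermitianDilation (a * k * b) := by
  ext i j
  rw [diagonalStarHom_mul_mul_star_apply]
  fin_cases i <;> fin_cases j <;> simp [hermitianDilation, mul_assoc]

lemma continuous_hermitianDilation : Continuous (hermitianDilation (A := A)) := by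
  refine continuous_pi fun i ↦ continuous_pi fun j ↦ ?_
  fin_cases i <;> fin_cases j
  exacts [continuous_const, continuous_id, continuous_star, continuous_const]

lemma map_diagonalStarHom (π : A →⋆ₙₐ[ℂ] B) (d : n → A) :
    mapₙₐ π (diagonalStarHom d) = diagonalStarHom (π ∘ d) :=
  congrArg ofMatrix (Matrix.diagonal_map (map_zero π))

variable [PartialOrder A] [StarOrderedRing A]

lemma norm_diagonalStarHom_le (d : n → A) : ‖diagonalStarHom d‖ ≤ ‖d‖ :=
  NonUnitalStarAlgHom.norm_apply_le _ d

lemma norm_hermitianDilation_le (k : A) : ‖hermitianDilation k‖ ≤ ‖k‖ := by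
  rw [mul_self_le_mul_self_iff (norm_nonneg _) (norm_nonneg _)]
  calc ‖hermitianDilation k‖ * ‖hermitianDilation k‖
      = ‖diagonalStarHom ![k * star k, star k * k]‖ := by
        rw [← hermitianDilation_mul_self, ← CStarRing.norm_star_mul_self,
          (isSelfAdjoint_hermitianDilation k).star_eq]
    _ ≤ ‖![k * star k, star k * k]‖ := norm_diagonalStarHom_le _
    _ ≤ ‖k‖ * ‖k‖ := by
      refine (pi_norm_le_iff_of_nonneg (by positivity)).2 fun i ↦ ?_
      fin_cases i
      exacts [CStarRing.norm_self_mul_star.le, CStarRing.norm_star_mul_self.le]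

end Matrix

lemma norm_mul_mul_le_of_forall_norm_le_one {E : Type*} [NonUnitalNormedRing E] [NormedSpace ℝ E]
    [IsScalarTower ℝ E E] [SMulCommClass ℝ E E] {e f x : E} {C : ℝ}
    (h : ∀ a a', ‖a * e‖ ≤ 1 → ‖f * a'‖ ≤ 1 → ‖a * x * a'‖ ≤ C) (a a' : E) :
    ‖a * x * a'‖ ≤ C * ‖a * e‖ * ‖f * a'‖ := by
  have bound {α β : ℝ} (hα : ‖a * e‖ < α) (hβ : ‖f * a'‖ < β) :
      ‖a * x * a'‖ ≤ C * α * β := by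
    have hα₀ : 0 < α := (norm_nonneg _).trans_lt hα
    have hβ₀ : 0 < β := (norm_nonneg _).trans_lt hβ
    have := h (α⁻¹ • a) (β⁻¹ • a')
      (by rw [smul_mul_assoc, norm_smul_of_nonneg (by positivity), inv_mul_le_one₀ hα₀]
          exact hα.le)
      (by rw [mul_smul_comm, norm_smul_of_nonneg (by positivity), inv_mul_le_one₀ hβ₀]
          exact hβ.le)
    rw [smul_mul_assoc, smul_mul_assoc, mul_smul_comm, norm_smul_of_nonneg (by positivity),
      norm_smul_of_nonneg (by positivity), inv_mul_le_iff₀ hα₀, inv_mul_le_iff₀ hβ₀] at this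
    linarith
  have tendsto_bound : Tendsto (fun t : ℝ ↦ C * (‖a * e‖ + t) * (‖f * a'‖ + t)) (𝓝[>] 0)
      (𝓝 (C * ‖a * e‖ * ‖f * a'‖)) :=
    tendsto_nhdsWithin_of_tendsto_nhds (Continuous.tendsto' (by fun_prop) _ _ (by simp))
  refine ge_of_tendsto tendsto_bound ?_
  filter_upwards [self_mem_nhdsWithin] with t (ht : 0 < t)
  exact bound (lt_add_of_pos_right _ ht) (lt_add_of_pos_right _ ht)

open CStarMatrix in
-- Dilating `b` to a self-adjoint `2 × 2` matrix reduces the claim to order intervals.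
lemma exists_map_eq_norm_mul_mul_le {A B : Type*} [NonUnitalCStarAlgebra A]
    [NonUnitalCStarAlgebra B] (π : A →⋆ₙₐ[ℂ] B) (hπ : Function.Surjective π) {e f : A} {b : B}
    {C : ℝ} (hC : 0 ≤ C)
    (hb : b ∈ closure ((fun k ↦ π e * k * π f) '' Metric.closedBall 0 C)) :
    ∃ x : A, π x = b ∧ ∀ a a', ‖a * x * a'‖ ≤ C * ‖a * e‖ * ‖f * a'‖ := by
  let _ := CStarAlgebra.spectralOrder A
  let _ := CStarAlgebra.spectralOrderedRing A
  let _ := CStarAlgebra.spectralOrder B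
  let _ := CStarAlgebra.spectralOrderedRing B
  let E : CStarMatrix (Fin 2) (Fin 2) A := diagonalStarHom ![e, star f]
  have map_E : mapₙₐ π E = diagonalStarHom ![π e, star (π f)] := by
    rw [map_diagonalStarHom]
    congr 1
    ext i
    fin_cases i <;> simp [map_star]
  obtain ⟨X, hXb, hX⟩ := exists_map_eq_norm_conjugate_le (mapₙₐ π) (surjective_mapₙₐ hπ)
    (e := E) (b := hermitianDilation b) hC <| by
      refine map_mem_closure continuous_hermitianDilation hb ?_
      rintro _ ⟨k, hk, rfl⟩
      refine ⟨hermitianDilation k, ⟨isSelfAdjoint_hermitianDilation k,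
        (norm_hermitianDilation_le k).trans (mem_closedBall_zero_iff.1 hk)⟩, ?_⟩
      simp only [map_E, diagonalStarHom_mul_hermitianDilation_mul_star]
  refine ⟨X 0 1, congrFun (congrFun hXb 0) 1,
    norm_mul_mul_le_of_forall_norm_le_one fun a a' ha ha' ↦ ?_⟩
  let D : CStarMatrix (Fin 2) (Fin 2) A := diagonalStarHom ![a, star a']
  have norm_D_mul_E : ‖D * E‖ ≤ 1 := by
    rw [← map_mul]
    refine (norm_diagonalStarHom_le _).trans ((pi_norm_le_iff_of_nonneg zero_le_one).2 fun i ↦ ?_)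
    fin_cases i
    · exact ha
    · simpa [← star_mul] using ha'
  calc ‖a * X 0 1 * a'‖ = ‖(D * X * star D) 0 1‖ := by
        rw [diagonalStarHom_mul_mul_star_apply]; simp
    _ ≤ ‖D * X * star D‖ := norm_entry_le_norm
    _ ≤ C * ‖D * E‖ ^ 2 := hX D
    _ ≤ C := mul_le_of_le_one_right hC (pow_le_one₀ (norm_nonneg _) norm_D_mul_E)

lemma exists_extension_of_denseRange {𝕜 E E' F F' G : Type*} [NontriviallyNormedField 𝕜]
    [AddCommGroup E] [Module 𝕜 E] [AddCommGroup F] [Module 𝕜 F]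
    [SeminormedAddCommGroup E'] [NormedSpace 𝕜 E'] [NormedAddCommGroup F'] [NormedSpace 𝕜 F']
    [NormedAddCommGroup G] [NormedSpace 𝕜 G] [CompleteSpace G]
    (f : E →ₗ[𝕜] F →ₗ[𝕜] G) {i : E →ₗ[𝕜] E'} {j : F →ₗ[𝕜] F'} (hi : DenseRange i)
    (hj : DenseRange j) {C : ℝ} (hC : 0 ≤ C) (hf : ∀ x y, ‖f x y‖ ≤ C * ‖i x‖ * ‖j y‖) :
    ∃ g : E' →L[𝕜] F' →L[𝕜] G, ‖g‖ ≤ C ∧ ∀ x y, g (i x) (j y) = f x y := by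
  have extend (x : E) : ∃ g : F' →L[𝕜] G, (∀ y, g (j y) = f x y) ∧ ‖g‖ ≤ C * ‖i x‖ :=
    ⟨(f x).extendOfNorm j, LinearMap.extendOfNorm_eq hj ⟨_, hf x⟩,
      LinearMap.opNorm_extendOfNorm_le hj (by positivity) (hf x)⟩
  choose φ φ_apply norm_φ_le using extend
  have eq_of_comp_eq {g g' : F' →L[𝕜] G} (h : ∀ y, g (j y) = g' (j y)) : g = g' :=
    DFunLike.coe_injective (hj.equalizer g.continuous g'.continuous (funext h))
  have φ_linear : IsLinearMap 𝕜 φ :=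
    { map_add x x' := eq_of_comp_eq fun y ↦ by simp [φ_apply]
      map_smul c x := eq_of_comp_eq fun y ↦ by simp [φ_apply] }
  refine ⟨φ_linear.mk'.extendOfNorm i, LinearMap.opNorm_extendOfNorm_le hi hC norm_φ_le,
    fun x y ↦ ?_⟩
  rw [LinearMap.extendOfNorm_eq hi ⟨C, norm_φ_le⟩, IsLinearMap.mk'_apply, φ_apply]

/-- A quasi-centralizer of `A`, that is, a bounded bilinear map on `A` which is left `A`-linear in
the first variable and right `A`-linear in the second. -/
structure IsQuasiCentralizer {𝕜 A : Type*} [NontriviallyNormedField 𝕜] [NonUnitalNormedRing A]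
    [NormedSpace 𝕜 A] (m : A →L[𝕜] A →L[𝕜] A) : Prop where
  map_mul_left (a b c : A) : m (a * b) c = a * m b c
  map_mul_right (a b c : A) : m a (b * c) = m a b * c

namespace IsQuasiCentralizer

lemma exists_of_norm_mul_mul_le {𝕜 A : Type*} [NontriviallyNormedField 𝕜] [NonUnitalNormedRing A]
    [NormedSpace 𝕜 A] [IsScalarTower 𝕜 A A] [SMulCommClass 𝕜 A A] [CompleteSpace A] {e f x : A}
    (he : DenseRange fun a ↦ a * e) (hf : DenseRange fun a ↦ f * a) {C : ℝ} (hC : 0 ≤ C)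
    (hx : ∀ a a', ‖a * x * a'‖ ≤ C * ‖a * e‖ * ‖f * a'‖) :
    ∃ m : A →L[𝕜] A →L[𝕜] A, IsQuasiCentralizer m ∧ ‖m‖ ≤ C ∧
      ∀ a a', m (a * e) (f * a') = a * x * a' := by
  obtain ⟨m, norm_m_le, m_apply⟩ := exists_extension_of_denseRange
    (LinearMap.mul 𝕜 A ∘ₗ LinearMap.mulRight 𝕜 x) (i := LinearMap.mulRight 𝕜 e)
    (j := LinearMap.mulLeft 𝕜 f) he hf hC hx
  replace m_apply (a a' : A) : m (a * e) (f * a') = a * x * a' := m_apply a a'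
  refine ⟨m, ⟨fun a b c ↦ ?_, fun a b c ↦ ?_⟩, norm_m_le, m_apply⟩
  · refine (he.prodMap hf).induction_on (p := fun y ↦ m (a * y.1) y.2 = a * m y.1 y.2) (b, c)
      (isClosed_eq (by fun_prop) (by fun_prop)) fun y ↦ ?_
    simp only [Prod.map_fst, Prod.map_snd, ← mul_assoc, m_apply]
  · refine (he.prodMap hf).induction_on (p := fun y ↦ m y.1 (y.2 * c) = m y.1 y.2 * c) (a, b)
      (isClosed_eq (by fun_prop) (by fun_prop)) fun y ↦ ?_
    simp only [Prod.map_fst, Prod.map_snd, mul_assoc, m_apply]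

variable {A B : Type*} [NonUnitalCStarAlgebra A] [NonUnitalCStarAlgebra B]
  {m : B →L[ℂ] B →L[ℂ] B}

lemma apply_mem_closure (hm : IsQuasiCentralizer m) {p q : B} (hp : IsSelfAdjoint p)
    (hq : IsSelfAdjoint q) :
    m p q ∈ closure ((fun k ↦ p * k * q) '' Metric.closedBall 0 ‖m‖) := by
  obtain ⟨v, hv, -, tendsto_p⟩ := exists_approx_pseudoinverse hp
  obtain ⟨w, -, hw, tendsto_q⟩ := exists_approx_pseudoinverse hq
  have m_continuous : Continuous fun y : B × B ↦ m y.1 y.2 := by fun_prop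
  refine mem_closure_of_tendsto
    ((m_continuous.tendsto (p, q)).comp (tendsto_p.prodMk_nhds tendsto_q))
    (Eventually.of_forall fun n ↦ ⟨m (v n * p) (q * w n), ?_, ?_⟩)
  · rw [mem_closedBall_zero_iff]
    exact (m.le_opNorm₂ _ _).trans (mul_le_of_le_one_right (by positivity) (hw n) |>.trans
      (mul_le_of_le_one_right (norm_nonneg m) (hv n)))
  · simp only [Function.comp_apply, hm.map_mul_left, hm.map_mul_right, mul_assoc]

lemma map_apply_of_denseRange {m' : A →L[ℂ] A →L[ℂ] A} (hm : IsQuasiCentralizer m)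
    (π : A →⋆ₙₐ[ℂ] B) {e f x : A} (he : DenseRange fun a ↦ a * e) (hf : DenseRange fun a ↦ f * a)
    (hm' : ∀ a a', m' (a * e) (f * a') = a * x * a') (hx : π x = m (π e) (π f)) (a a' : A) :
    π (m' a a') = m (π a) (π a') := by
  refine (he.prodMap hf).induction_on (p := fun y ↦ π (m' y.1 y.2) = m (π y.1) (π y.2)) (a, a')
    (isClosed_eq (by fun_prop) (by fun_prop)) fun y ↦ ?_
  simp only [Prod.map_fst, Prod.map_snd, hm', map_mul, hx, hm.map_mul_left, hm.map_mul_right,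
    mul_assoc]

lemma norm_le_of_map_apply (hm : IsQuasiCentralizer m) {π : A →⋆ₙₐ[ℂ] B}
    (hπ : Function.Surjective π) {m' : A →L[ℂ] A →L[ℂ] A}
    (h : ∀ a a', π (m' a a') = m (π a) (π a')) : ‖m‖ ≤ ‖m'‖ := by
  let _ := CStarAlgebra.spectralOrder A
  let _ := CStarAlgebra.spectralOrderedRing A
  have unit := CStarAlgebra.increasingApproximateUnit A
  have := unit.neBot
  refine m.opNorm_le_bound₂ (norm_nonneg m') fun b b' ↦ ?_
  obtain ⟨a, rfl⟩ := hπ b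
  obtain ⟨a', rfl⟩ := hπ b'
  have cont : Continuous fun y : A × A ↦ m (π y.1) (π y.2) := by fun_prop
  have tendsto_pair : Tendsto (fun u ↦ (a * u, u * a')) (CStarAlgebra.approximateUnit A)
      (𝓝 (a, a')) :=
    (unit.tendsto_mul_left a).prodMk_nhds (unit.tendsto_mul_right a')
  have approx := (cont.tendsto (a, a')).comp tendsto_pair
  refine le_of_tendsto approx.norm ?_
  filter_upwards [unit.eventually_norm] with u hu
  have norm_map_le : ‖π (m' u u)‖ ≤ ‖m'‖ :=
    calc ‖π (m' u u)‖ ≤ ‖m' u u‖ := NonUnitalStarAlgHom.norm_apply_le π _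
      _ ≤ ‖m'‖ * ‖u‖ * ‖u‖ := m'.le_opNorm₂ u u
      _ ≤ ‖m'‖ * 1 * 1 := by gcongr
      _ = ‖m'‖ := by ring
  calc ‖m (π (a * u)) (π (u * a'))‖ = ‖π a * π (m' u u) * π a'‖ := by
        rw [map_mul π, map_mul π, hm.map_mul_left, hm.map_mul_right, ← h, mul_assoc]
    _ ≤ ‖π a‖ * ‖π (m' u u)‖ * ‖π a'‖ := norm_mul₃_le
    _ ≤ ‖π a‖ * ‖m'‖ * ‖π a'‖ := by gcongr
    _ = ‖m'‖ * ‖π a‖ * ‖π a'‖ := by ring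

end IsQuasiCentralizer

lemma denseRange_mul_right_of_isSelfAdjoint {A : Type*} [NonUnitalSemiring A] [StarRing A]
    [TopologicalSpace A] [ContinuousStar A] {e : A} (he : IsSelfAdjoint e)
    (hd : DenseRange fun a ↦ e * a) : DenseRange fun a ↦ a * e := by
  have star_comp : (star ∘ fun a ↦ e * a) = (fun a ↦ a * e) ∘ star := by
    ext a
    simp [he.star_eq]
  refine Dense.mono (range_comp_subset_range star _) ?_
  rw [← star_comp]
  exact star_involutive.surjective.denseRange.comp hd continuous_star

theorem stmt12 {A B : Type*} [NonUnitalCStarAlgebra A] [NonUnitalCStarAlgebra B]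
    -- `π : A → B` is a surjective ⋆-homomorphism
    (π : A →⋆ₙₐ[ℂ] B) (hsurj : Function.Surjective π)
    -- `A` is σ-unital
    (hσ : ∃ e : A, (∃ f : A, e = star f * f) ∧ Dense (Set.range fun a : A => e * a))
    -- `m` is a (bounded, bilinear) quasi-centralizer of `B`
    (m : B →L[ℂ] B →L[ℂ] B)
    (hm₁ : ∀ b₁ b₂ b₃ : B, m (b₁ * b₂) b₃ = b₁ * m b₂ b₃)
    (hm₂ : ∀ b₁ b₂ b₃ : B, m b₁ (b₂ * b₃) = m b₁ b₂ * b₃) :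
    ∃ m' : A →L[ℂ] A →L[ℂ] A,
      (∀ a₁ a₂ a₃ : A, m' (a₁ * a₂) a₃ = a₁ * m' a₂ a₃) ∧
      (∀ a₁ a₂ a₃ : A, m' a₁ (a₂ * a₃) = m' a₁ a₂ * a₃) ∧
      (∀ a a' : A, π (m' a a') = m (π a) (π a')) ∧
      ‖m'‖ = ‖m‖ := by
  obtain ⟨e, ⟨f, he_eq⟩, right_dense⟩ := hσ
  have he : IsSelfAdjoint e := he_eq ▸ .star_mul_self f
  have left_dense := denseRange_mul_right_of_isSelfAdjoint he right_dense
  have hm : IsQuasiCentralizer m := ⟨hm₁, hm₂⟩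
  obtain ⟨x, hx, norm_x_le⟩ := exists_map_eq_norm_mul_mul_le π hsurj (norm_nonneg m)
    (hm.apply_mem_closure (he.map π) (he.map π))
  obtain ⟨m', hm', norm_m'_le, m'_apply⟩ := IsQuasiCentralizer.exists_of_norm_mul_mul_le (𝕜 := ℂ)
    left_dense right_dense (norm_nonneg m) norm_x_le
  have map_m' := hm.map_apply_of_denseRange π left_dense right_dense m'_apply hx
  exact ⟨m', hm'.map_mul_left, hm'.map_mul_right, map_m',
    le_antisymm norm_m'_le (hm.norm_le_of_map_apply hsurj map_m')⟩
end

section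
/- Let H be a complex Hilbert space and A ⊆ B(H) a nondegenerate C*-subalgebra. Suppose every left multiplier of A is a multiplier, i.e., every T ∈ B(H) with TA ⊆ A also satisfies AT ⊆ A. Then every quasi-multiplier of A is a multiplier: every T ∈ B(H) with aTa' ∈ A for all a, a' ∈ A satisfies TA ⊆ A and AT ⊆ A. -/
open ContinuousLinearMap

variable {H : Type*} [NormedAddCommGroup H] [InnerProductSpace ℂ H] [CompleteSpace H]

/-! For a quasi-multiplier `x` and `a ∈ A`, the product `a * x` is a left multiplier, hence by
hypothesis a right multiplier, so `e * (a * x) ∈ A` for every `e ∈ A`. As `e` runs through an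
approximate unit, `(e * a) * x` tends to `a * x`, which therefore lies in `A`. The other half
follows by applying this to `star x`. -/

section Multipliers

variable {M S : Type*} [SetLike S M]

section Mul

variable [Mul M]

/-- `x` is a left multiplier of `A`. Multipliers of each kind are taken inside an ambient `M`, which
plays the role of `B(H)`, and not in an abstract multiplier algebra. -/
def IsLeftMultiplier (A : S) (x : M) : Prop :=
  ∀ a ∈ A, x * a ∈ A

/-- `x` is a right multiplier of `A`; a multiplier is an element that is both a left and a right
multiplier. -/
def IsRightMultiplier (A : S) (x : M) : Prop :=
  ∀ a ∈ A, a * x ∈ A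

/-- `x` is a quasi-multiplier of `A`: multiplying it by `A` on both sides at once, though not
necessarily on a single side, lands in `A`. -/
def IsQuasiMultiplier (A : S) (x : M) : Prop :=
  ∀ a ∈ A, ∀ b ∈ A, a * x * b ∈ A

variable {A : S} {x : M}

theorem IsQuasiMultiplier.isLeftMultiplier_mul (hx : IsQuasiMultiplier A x) {a : M} (ha : a ∈ A) :
    IsLeftMultiplier A (a * x) :=
  hx a ha

theorem IsRightMultiplier.isLeftMultiplier_of_star [StarMul M] [StarMemClass S M]
    (hx : IsRightMultiplier A (star x)) : IsLeftMultiplier A x := by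
  intro a ha
  simpa only [star_mul, star_star] using star_mem (hx (star a) (star_mem ha))

end Mul

variable [Semigroup M] {A : S} {x : M}

protected theorem IsQuasiMultiplier.star [StarMul M] [StarMemClass S M]
    (hx : IsQuasiMultiplier A x) : IsQuasiMultiplier A (star x) := by
  intro a ha b hb
  simpa only [star_mul, star_star, mul_assoc] using
    star_mem (hx (star b) (star_mem hb) (star a) (star_mem ha))

theorem IsQuasiMultiplier.isRightMultiplier [TopologicalSpace M] [SeparatelyContinuousMul M]
    (hA : IsClosed (A : Set M)) (hunit : ∀ a ∈ A, a ∈ closure ((· * a) '' (A : Set M)))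
    (hLR : ∀ y : M, IsLeftMultiplier A y → IsRightMultiplier A y) (hx : IsQuasiMultiplier A x) :
    IsRightMultiplier A x := by
  intro a ha
  have hmaps : Set.MapsTo (· * x) ((· * a) '' (A : Set M)) (A : Set M) := by
    rintro _ ⟨e, he, rfl⟩
    simpa only [mul_assoc, SetLike.mem_coe] using hLR (a * x) (hx.isLeftMultiplier_mul ha) e he
  exact hA.closure_subset <|
    map_mem_closure (f := (· * x)) (continuous_mul_const x) (hunit a ha) hmaps

end Multipliers

section CStarAlgebra

variable {B S : Type*} [NonUnitalCStarAlgebra B] [SetLike S B] [NonUnitalSubringClass S B]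
  [SMulMemClass S ℂ B] [StarMemClass S B] {A : S}

theorem mem_closure_image_mul_right_of_isClosed (hA : IsClosed (A : Set B)) {a : B} (ha : a ∈ A) :
    a ∈ closure ((· * a) '' (A : Set B)) := by
  let : PartialOrder A := CStarAlgebra.spectralOrder A
  have : StarOrderedRing A := CStarAlgebra.spectralOrderedRing A
  have happrox := CStarAlgebra.increasingApproximateUnit A
  have := happrox.neBot
  have hlim := (continuous_subtype_val.tendsto _).comp (happrox.tendsto_mul_right ⟨a, ha⟩)
  exact mem_closure_of_tendsto hlim (.of_forall fun e ↦ Set.mem_image_of_mem _ e.2)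

theorem stmt14_general (hA : IsClosed (A : Set B))
    (hLR : ∀ y : B, IsLeftMultiplier A y → IsRightMultiplier A y) {x : B}
    (hx : IsQuasiMultiplier A x) : IsLeftMultiplier A x ∧ IsRightMultiplier A x := by
  have hright {y : B} (hy : IsQuasiMultiplier A y) : IsRightMultiplier A y :=
    hy.isRightMultiplier hA (fun _ ↦ mem_closure_image_mul_right_of_isClosed hA) hLR
  exact ⟨(hright hx.star).isLeftMultiplier_of_star, hright hx⟩

end CStarAlgebra

theorem stmt14
    (A : NonUnitalStarSubalgebra ℂ (H →L[ℂ] H))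
    (hAc : IsClosed (A : Set (H →L[ℂ] H)))
    -- `A` is nondegenerate
    (hnd : Dense (Submodule.span ℂ {v : H | ∃ a ∈ A, ∃ ξ : H, a ξ = v} : Set H))
    -- every left multiplier of `A` is a multiplier
    (hLM : ∀ T : H →L[ℂ] H, (∀ a ∈ A, T * a ∈ A) → ∀ a ∈ A, a * T ∈ A) :
    -- every quasi-multiplier of `A` is a multiplier
    ∀ T : H →L[ℂ] H, (∀ a ∈ A, ∀ a' ∈ A, a * T * a' ∈ A) →
      (∀ a ∈ A, T * a ∈ A) ∧ (∀ a ∈ A, a * T ∈ A) :=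
  fun _ hT ↦ stmt14_general hAc hLM hT
end

section
/- Let H be a complex Hilbert space with identity operator 1, and let A ⊆ B(H) be a nondegenerate C*-subalgebra. Suppose QM(A) ≠ LM(A) + RM(A), i.e., there exists an operator S ∈ B(H) with aSa' ∈ A for all a, a' ∈ A which cannot be written as S = T + T' with TA ⊆ A and AT' ⊆ A. Then there exists ε > 0 such that for every δ > 0 there is an operator h ∈ B(H) with a h a' ∈ A for all a, a' ∈ A (h is a quasi-multiplier of A) and (1 − δ)·1 ≤ h ≤ (1 + δ)·1, for which there is no T ∈ B(H) with TA ⊆ A, ‖T − 1‖ < ε, and T*T = h. -/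
open ContinuousLinearMap

variable {H : Type*} [NormedAddCommGroup H] [InnerProductSpace ℂ H] [CompleteSpace H]

/-!
If `T` is a left multiplier close to `1` with `star T * T = 1 + c • S`, then `T` has an inverse `V`
among the left multipliers, and `S * V = c⁻¹ • (star T - V)` is a right multiplier plus a left one.
Since `V` is close to a scalar, this decomposes `S` up to an error that is a fixed proportion of
`‖S‖`, at a cost of order `‖S‖ / δ` when `‖c • S‖ = δ`. If every quasi-multiplier `δ`-close to `1`
had such a factorization, iterating the approximation would decompose every self-adjoint
quasi-multiplier exactly, and hence every quasi-multiplier.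
-/

section Approximation

variable {E F : Type*} [NormedAddCommGroup E] [CompleteSpace E] [NormedAddCommGroup F]

theorem exists_preimage_of_approx {f : E →+ F} (hf : Continuous f) {s : Set F} {C r : ℝ}
    (hr : r < 1)
    (happrox : ∀ y ∈ s, ∃ x, y - f x ∈ s ∧ ‖x‖ ≤ C * ‖y‖ ∧ ‖y - f x‖ ≤ r * ‖y‖)
    {y : F} (hy : y ∈ s) : ∃ x, f x = y := by
  choose! g hg_mem hg_norm hg_approx using happrox
  let residual : ℕ → F := fun n => (fun z => z - f (g z))^[n] y
  have residual_succ (n : ℕ) : residual (n + 1) = residual n - f (g (residual n)) :=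
    Function.iterate_succ_apply' _ n y
  have residual_mem (n : ℕ) : residual n ∈ s := by
    induction n with
    | zero => exact hy
    | succ n ih => exact residual_succ n ▸ hg_mem _ ih
  have summable_norm_residual : Summable fun n => ‖residual n‖ := by
    refine summable_of_ratio_norm_eventually_le hr (.of_forall fun n => ?_)
    simpa only [norm_norm, residual_succ] using hg_approx _ (residual_mem n)
  have summable_correction : Summable fun n => g (residual n) :=
    .of_norm_bounded (summable_norm_residual.mul_left C) fun n => hg_norm _ (residual_mem n)
  have sum_correction (n : ℕ) :
      ∑ i ∈ Finset.range n, f (g (residual i)) = y - residual n := by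
    rw [← sub_sub_self (residual 0) (residual n), ← Finset.sum_range_sub']
    simp [residual_succ, residual]
  have tendsto_residual : Filter.Tendsto residual .atTop (nhds 0) :=
    tendsto_zero_iff_norm_tendsto_zero.2 summable_norm_residual.tendsto_atTop_zero
  refine ⟨∑' n, g (residual n),
    tendsto_nhds_unique (summable_correction.hasSum.map f hf).tendsto_sum_nat ?_⟩
  simpa [sum_correction] using tendsto_residual.const_sub y

end Approximation

section Multipliers

variable {R B : Type*} [CommSemiring R] [Ring B] [StarRing B] [Algebra R B]

/-- The left multipliers `LM(A)`, relative to an arbitrary ambient algebra `B` in place of `B(H)`;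
bundled as a subalgebra so that left multipliers near `1` can be inverted in it. -/
def leftMultipliers (A : NonUnitalStarSubalgebra R B) : Subalgebra R B where
  carrier := {T | ∀ a ∈ A, T * a ∈ A}
  mul_mem' hS hT a ha := by rw [mul_assoc]; exact hS _ (hT a ha)
  add_mem' hS hT a ha := by rw [add_mul]; exact add_mem (hS a ha) (hT a ha)
  algebraMap_mem' r a ha := by rw [← Algebra.smul_def]; exact SMulMemClass.smul_mem r ha

/-- The quasi-multipliers `QM(A)`, relative to an arbitrary ambient algebra `B` in place of `B(H)`;
only a subspace, since products of quasi-multipliers need not be quasi-multipliers. -/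
def quasiMultipliers (A : NonUnitalStarSubalgebra R B) : Submodule R B where
  carrier := {T | ∀ a ∈ A, ∀ a' ∈ A, a * T * a' ∈ A}
  add_mem' hS hT a ha a' ha' := by
    rw [mul_add, add_mul]
    exact add_mem (hS a ha a' ha') (hT a ha a' ha')
  zero_mem' a _ a' _ := by simp
  smul_mem' r T hT a ha a' ha' := by
    rw [mul_smul_comm, smul_mul_assoc]
    exact SMulMemClass.smul_mem r (hT a ha a' ha')

variable {A : NonUnitalStarSubalgebra R B} {T : B}

theorem mem_quasiMultipliers_of_mem_leftMultipliers (hT : T ∈ leftMultipliers A) :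
    T ∈ quasiMultipliers A := fun a ha a' ha' => by
  rw [mul_assoc]
  exact mul_mem ha (hT a' ha')

theorem star_mem_quasiMultipliers (hT : T ∈ quasiMultipliers A) :
    star T ∈ quasiMultipliers A := fun a ha a' ha' => by
  simpa [mul_assoc] using star_mem (hT _ (star_mem ha') _ (star_mem ha))

theorem mul_star_mem_of_mem_leftMultipliers (hT : T ∈ leftMultipliers A) {a : B} (ha : a ∈ A) :
    a * star T ∈ A := by
  simpa using star_mem (hT _ (star_mem ha))

theorem isClosed_leftMultipliers [TopologicalSpace B] [ContinuousMul B]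
    (hA : IsClosed (A : Set B)) : IsClosed (leftMultipliers A : Set B) := by
  have : (leftMultipliers A : Set B) = ⋂ a ∈ A, (· * a) ⁻¹' (A : Set B) := by
    ext T
    simp [leftMultipliers]
  rw [this]
  exact isClosed_biInter fun a _ => hA.preimage (continuous_mul_const a)

end Multipliers

theorem exists_mem_leftMultipliers_add_star_eq {B : Type*} [Ring B] [StarRing B] [Algebra ℂ B]
    [StarModule ℂ B] {A : NonUnitalStarSubalgebra ℂ B}
    (hsa : ∀ S ∈ quasiMultipliers A, IsSelfAdjoint S → ∃ L ∈ leftMultipliers A, L + star L = S)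
    {S : B} (hS : S ∈ quasiMultipliers A) :
    ∃ L ∈ leftMultipliers A, ∃ M ∈ leftMultipliers A, L + star M = S := by
  have star_hS := star_mem_quasiMultipliers hS
  obtain ⟨L, hL, hLS⟩ := hsa (realPart S)
    (realPart_apply_coe S ▸ Submodule.smul_of_tower_mem _ _ (add_mem hS star_hS)) (realPart S).2
  obtain ⟨M, hM, hMS⟩ := hsa (imaginaryPart S)
    (imaginaryPart_apply_coe S ▸ Submodule.smul_mem _ _
      (Submodule.smul_of_tower_mem _ _ (sub_mem hS star_hS))) (imaginaryPart S).2
  have hIM : Complex.I • M ∈ leftMultipliers A := Subalgebra.smul_mem _ hM _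
  refine ⟨L + Complex.I • M, add_mem hL hIM, L - Complex.I • M, sub_mem hL hIM, ?_⟩
  rw [← realPart_add_I_smul_imaginaryPart S, ← hLS, ← hMS]
  simp only [star_sub, star_smul, Complex.star_def, Complex.conj_I]
  module

theorem exists_mem_mul_eq_one_of_norm_sub_one_lt_one {B σ : Type*} [NormedRing B] [CompleteSpace B]
    [SetLike σ B] [SubringClass σ B] {M : σ} (hM : IsClosed (M : Set B)) {T : B} (hT : T ∈ M)
    (hT1 : ‖T - 1‖ < 1) : ∃ V ∈ M, T * V = 1 := by
  have : CompleteSpace M := hM.completeSpace_coe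
  let x : M := 1 - ⟨T, hT⟩
  have hx : ‖x‖ < 1 := by
    rw [norm_sub_rev] at hT1
    exact hT1
  obtain ⟨V, hV⟩ := (isUnit_one_sub_of_norm_lt_one hx).exists_right_inv
  refine ⟨V, V.2, ?_⟩
  simpa [x] using congrArg Subtype.val hV

section CStarAlgebra

variable {B : Type*} [CStarAlgebra B]

-- The Möbius map `z ↦ (ε² + z) / (1 + z)` sends the disc `|z| ≤ ε` to itself, and its value at
-- `T - 1` is `1 - (1 - ε²) • V`.
theorem norm_one_sub_smul_right_inverse_le {T V : B} {ε : ℝ} (hε : ε ≤ 1) (hT : ‖T - 1‖ ≤ ε)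
    (hTV : T * V = 1) : ‖1 - (1 - ε ^ 2) • V‖ ≤ ε := by
  let := CStarAlgebra.spectralOrder B
  let := CStarAlgebra.spectralOrderedRing B
  have hε0 : 0 ≤ ε := (norm_nonneg _).trans hT
  set k : ℝ := 1 - ε ^ 2 with hk
  have hk0 : 0 ≤ k := by nlinarith
  have hX : star (T - 1) * (T - 1) ≤ ε ^ 2 • (1 : B) := by
    rw [← Algebra.algebraMap_eq_smul_one]
    exact CStarAlgebra.star_mul_le_algebraMap_norm_sq.trans (algebraMap_mono B (by gcongr))
  have hTk : star (T - k • 1) * (T - k • 1) ≤ ε ^ 2 • (star T * T) := by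
    rw [← sub_nonneg]
    convert smul_nonneg hk0 (sub_nonneg.2 hX) using 1
    simp only [star_sub, star_smul, star_one, star_trivial, sub_mul, mul_sub, mul_one, one_mul,
      smul_mul_assoc, mul_smul_comm, hk]
    module
  have hfactor : 1 - k • V = (T - k • 1) * V := by
    rw [sub_mul, hTV, smul_one_mul]
  have hsq : star (1 - k • V) * (1 - k • V) ≤ algebraMap ℝ B (ε ^ 2) := calc
    star (1 - k • V) * (1 - k • V)
        = star V * (star (T - k • 1) * (T - k • 1)) * V := by
      simp only [hfactor, star_mul, mul_assoc]
    _ ≤ star V * (ε ^ 2 • (star T * T)) * V := star_left_conjugate_le_conjugate hTk V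
    _ = ε ^ 2 • (star (T * V) * (T * V)) := by
      simp only [star_mul, mul_smul_comm, smul_mul_assoc, mul_assoc]
    _ = algebraMap ℝ B (ε ^ 2) := by
      rw [hTV, star_one, one_mul, Algebra.algebraMap_eq_smul_one]
  rw [← CStarAlgebra.norm_le_iff_le_algebraMap _ (by positivity) (star_mul_self_nonneg _),
    CStarRing.norm_star_mul_self, ← pow_two] at hsq
  exact le_of_sq_le_sq hsq hε0

theorem norm_smul_sub_right_inverse_le {T V : B} {ε : ℝ} (hε : ε ≤ 1) (hT : ‖T - 1‖ ≤ ε)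
    (hTV : T * V = 1) : ‖(1 - ε ^ 2) • (T - V)‖ ≤ 2 := by
  nontriviality B
  have hε0 : 0 ≤ ε := (norm_nonneg _).trans hT
  have hk0 : 0 ≤ 1 - ε ^ 2 := by nlinarith
  calc ‖(1 - ε ^ 2) • (T - V)‖
      = ‖(1 - ε ^ 2) • (T - 1) + (1 - (1 - ε ^ 2) • V) - ε ^ 2 • (1 : B)‖ := by
        congr 1
        module
    _ ≤ ‖(1 - ε ^ 2) • (T - 1)‖ + ‖1 - (1 - ε ^ 2) • V‖ + ‖ε ^ 2 • (1 : B)‖ :=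
        (norm_sub_le _ _).trans (by gcongr; exact norm_add_le _ _)
    _ ≤ (1 - ε ^ 2) * ε + ε + ε ^ 2 := by
        rw [norm_smul_of_nonneg hk0, norm_smul_of_nonneg (sq_nonneg ε), norm_one, mul_one]
        gcongr
        exact norm_one_sub_smul_right_inverse_le hε hT hTV
    _ ≤ 2 := by nlinarith [mul_nonneg hε0 hk0]

variable {A : NonUnitalStarSubalgebra ℂ B}

theorem exists_mem_leftMultipliers_add_star_self_approx (hA : IsClosed (A : Set B)) {S T : B}
    {ε c : ℝ} (hε : ε < 1) (hc : 0 < c) (hT : T ∈ leftMultipliers A)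
    (hT1 : ‖T - 1‖ ≤ ε) (hTS : star T * T = 1 + c • S) :
    ∃ L ∈ leftMultipliers A, ‖L‖ ≤ c⁻¹ ∧ ‖S - (L + star L)‖ ≤ ε * ‖S‖ := by
  obtain ⟨V, hV, hTV⟩ := exists_mem_mul_eq_one_of_norm_sub_one_lt_one
    (isClosed_leftMultipliers hA) hT (hT1.trans_lt hε)
  have hS : star S = S := by
    rw [← sub_eq_iff_eq_add', eq_comm, ← eq_inv_smul_iff₀ hc.ne'] at hTS
    rw [hTS]
    exact (IsSelfAdjoint.all c⁻¹).smul ((IsSelfAdjoint.star_mul_self T).sub (.one B))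
  have hSV : S * V = c⁻¹ • (star T - V) := by
    rw [eq_inv_smul_iff₀ hc.ne', eq_sub_iff_add_eq', ← smul_mul_assoc, ← one_add_mul, ← hTS,
      mul_assoc, hTV, mul_one]
  set k : ℝ := 1 - ε ^ 2
  have norm_error : ‖S * (1 - k • V)‖ ≤ ε * ‖S‖ := by
    rw [mul_comm ε]
    refine (norm_mul_le _ _).trans ?_
    gcongr
    exact norm_one_sub_smul_right_inverse_le hε.le hT1 hTV
  have hdecomp : S - ((2 * c)⁻¹ • k • (T - V) + star ((2 * c)⁻¹ • k • (T - V))) =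
      (2⁻¹ : ℝ) • (S * (1 - k • V) + star (S * (1 - k • V))) := by
    rw [mul_sub, mul_smul_comm, hSV]
    simp only [mul_one, star_sub, star_smul, star_star, star_trivial, hS, mul_inv]
    module
  refine ⟨(2 * c)⁻¹ • k • (T - V), ?_, ?_, ?_⟩
  · exact Submodule.smul_of_tower_mem (leftMultipliers A).toSubmodule _
      (Submodule.smul_of_tower_mem _ _ (sub_mem hT hV))
  · rw [norm_smul_of_nonneg (by positivity), mul_inv_rev, mul_assoc]
    have := norm_smul_sub_right_inverse_le hε.le hT1 hTV
    exact mul_le_of_le_one_right (by positivity) (by linarith)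
  · rw [hdecomp, norm_smul_of_nonneg (by norm_num)]
    have := norm_add_le (S * (1 - k • V)) (star (S * (1 - k • V)))
    rw [norm_star] at this
    linarith

variable [PartialOrder B] [StarOrderedRing B]

theorem one_add_mem_Icc_of_norm_le {S : B} (hS : IsSelfAdjoint S) {δ : ℝ} (hSδ : ‖S‖ ≤ δ) :
    1 + S ∈ Set.Icc ((1 - δ) • (1 : B)) ((1 + δ) • 1) := by
  have hδ : algebraMap ℝ B ‖S‖ ≤ δ • 1 := by
    rw [← Algebra.algebraMap_eq_smul_one]
    exact algebraMap_mono B hSδ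
  rw [sub_smul, add_smul, one_smul, sub_eq_add_neg]
  exact ⟨by grw [← hS.neg_algebraMap_norm_le_self, hδ], by grw [hS.le_algebraMap_norm_self, hδ]⟩

theorem exists_mem_leftMultipliers_add_star_self_eq (hA : IsClosed (A : Set B)) {ε δ : ℝ}
    (hε : ε < 1) (hδ : 0 < δ)
    (hfactor : ∀ h ∈ quasiMultipliers A, h ∈ Set.Icc ((1 - δ) • (1 : B)) ((1 + δ) • 1) →
      ∃ T ∈ leftMultipliers A, ‖T - 1‖ < ε ∧ star T * T = h)
    {S : B} (hS : S ∈ quasiMultipliers A) (hS_sa : IsSelfAdjoint S) :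
    ∃ L ∈ leftMultipliers A, L + star L = S := by
  have : CompleteSpace (leftMultipliers A) := (isClosed_leftMultipliers hA).completeSpace_coe
  let f : leftMultipliers A →+ B :=
    .mk' (fun L => (L : B) + star (L : B)) fun L M => by simp [add_add_add_comm]
  have hf : Continuous f := continuous_subtype_val.add continuous_subtype_val.star
  suffices ∃ L, f L = S from this.elim fun L hL => ⟨L, L.2, hL⟩
  refine exists_preimage_of_approx hf hε (s := {S | S ∈ quasiMultipliers A ∧ IsSelfAdjoint S})
    (C := δ⁻¹) ?_ ⟨hS, hS_sa⟩
  rintro S ⟨hS, hS_sa⟩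
  obtain rfl | hS0 := eq_or_ne S 0
  · exact ⟨0, by simp [IsSelfAdjoint.zero]⟩
  have hc : 0 < δ / ‖S‖ := by positivity
  have hcS : ‖(δ / ‖S‖) • S‖ ≤ δ := by
    rw [norm_smul_of_nonneg hc.le, div_mul_cancel₀ _ (norm_ne_zero_iff.2 hS0)]
  obtain ⟨T, hT, hT1, hTS⟩ := hfactor (1 + (δ / ‖S‖) • S)
    (add_mem (mem_quasiMultipliers_of_mem_leftMultipliers (one_mem _))
      (Submodule.smul_of_tower_mem _ _ hS))
    (one_add_mem_Icc_of_norm_le ((IsSelfAdjoint.all _).smul hS_sa) hcS)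
  obtain ⟨L, hL, hL_norm, hL_approx⟩ :=
    exists_mem_leftMultipliers_add_star_self_approx hA hε hc hT hT1.le hTS
  have hL_quasi := mem_quasiMultipliers_of_mem_leftMultipliers hL
  refine ⟨⟨L, hL⟩, ⟨sub_mem hS (add_mem hL_quasi (star_mem_quasiMultipliers hL_quasi)),
    hS_sa.sub (.add_star_self L)⟩, ?_, hL_approx⟩
  rwa [inv_div, div_eq_inv_mul] at hL_norm

theorem stmt19_general (A : NonUnitalStarSubalgebra ℂ B) (hA : IsClosed (A : Set B))
    (hQM : ∃ S : B, (∀ a ∈ A, ∀ a' ∈ A, a * S * a' ∈ A) ∧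
      ¬∃ T T' : B, (∀ a ∈ A, T * a ∈ A) ∧ (∀ a ∈ A, a * T' ∈ A) ∧ S = T + T')
    {ε δ : ℝ} (hε : ε < 1) (hδ : 0 < δ) :
    ∃ h : B, (∀ a ∈ A, ∀ a' ∈ A, a * h * a' ∈ A) ∧
      ((1 - δ : ℝ) : ℂ) • (1 : B) ≤ h ∧ h ≤ ((1 + δ : ℝ) : ℂ) • (1 : B) ∧
      ¬∃ T : B, (∀ a ∈ A, T * a ∈ A) ∧ ‖T - 1‖ < ε ∧ star T * T = h := by
  simp only [Complex.coe_smul]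
  by_contra! hfactor
  obtain ⟨S, hS, hS_not⟩ := hQM
  obtain ⟨L, hL, M, hM, hLM⟩ := exists_mem_leftMultipliers_add_star_eq
    (fun S hS hS_sa => exists_mem_leftMultipliers_add_star_self_eq hA hε hδ
      (fun h hh hIcc => hfactor h hh hIcc.1 hIcc.2) hS hS_sa) hS
  exact hS_not ⟨L, star M, hL, fun a ha => mul_star_mem_of_mem_leftMultipliers hM ha, hLM.symm⟩

end CStarAlgebra

theorem stmt19
    (A : NonUnitalStarSubalgebra ℂ (H →L[ℂ] H))
    (hAc : IsClosed (A : Set (H →L[ℂ] H)))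
    -- `A` is nondegenerate
    (hnd : Dense (Submodule.span ℂ {v : H | ∃ a ∈ A, ∃ ξ : H, a ξ = v} : Set H))
    -- `QM(A) ≠ LM(A) + RM(A)`
    (hQM : ∃ S : H →L[ℂ] H, (∀ a ∈ A, ∀ a' ∈ A, a * S * a' ∈ A) ∧
      ¬∃ T T' : H →L[ℂ] H, (∀ a ∈ A, T * a ∈ A) ∧ (∀ a ∈ A, a * T' ∈ A) ∧ S = T + T') :
    ∃ ε : ℝ, 0 < ε ∧ ∀ δ : ℝ, 0 < δ →
      ∃ h : H →L[ℂ] H,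
        (∀ a ∈ A, ∀ a' ∈ A, a * h * a' ∈ A) ∧
        ((1 - δ : ℝ) : ℂ) • (1 : H →L[ℂ] H) ≤ h ∧
        h ≤ ((1 + δ : ℝ) : ℂ) • (1 : H →L[ℂ] H) ∧
        ¬∃ T : H →L[ℂ] H, (∀ a ∈ A, T * a ∈ A) ∧ ‖T - 1‖ < ε ∧ star T * T = h := by
  exact ⟨1 / 2, by norm_num, fun δ hδ => stmt19_general A hAc hQM (by norm_num) hδ⟩
end
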